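/- Fix any ρ > 0. For every real damping parameter ω, the supremum over θ ∈ T^H of max{ |1 − ω|, |1 − ω·g_m(θ)|, |1 − ω·σ*(1/g_m(θ), ρ)| } (the spectral radius of the symbol of the mass-Braess–Sarazin relaxation error operator) is at least 1/3, and this supremum equals 1/3 if and only if ω = 3/4. In other words, the optimal LFA smoothing factor for the mass-Braess–Sarazin relaxation is 1/3, uniquely attained at ω = 3/4, independently of the Lamé constants. -/

import Mathlib

open Real Set

/-- The high-frequency set `T^H`. -/
def TH : Set (ℝ × ℝ) :=
  (Ioc (-(π/2)) (3*π/2) ×ˢ Ioc (-(π/2)) (3*π/2)) \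
    (Ioc (-(π/2)) (π/2) ×ˢ Ioc (-(π/2)) (π/2))

/-- Scaled symbol of the five-point discrete Laplacian. -/
noncomputable def chi (θ : ℝ × ℝ) : ℝ := 4 - 2 * Real.cos θ.1 - 2 * Real.cos θ.2

/-- Scaled symbol of the product of the bilinear mass matrix and the discrete Laplacian. -/
noncomputable def gm (θ : ℝ × ℝ) : ℝ :=
  chi θ * (4 + 2 * Real.cos θ.1 + 2 * Real.cos θ.2 + Real.cos θ.1 * Real.cos θ.2) / 9

/-- Third eigenvalue of the preconditioned elasticity symbol, as a function of
`t = η/χ` and `ρ = ε/λ`. -/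
noncomputable def sigmaStar (t ρ : ℝ) : ℝ := (1 + 2*ρ) / (1 + (1 + t)*ρ)

lemma poly_bounds (x y : ℝ) (hx : -1 ≤ x) (hx0 : x ≤ 0) (hy : -1 ≤ y) (hy1 : y ≤ 1) :
    8/9 ≤ (4 - 2*x - 2*y) * (4 + 2*x + 2*y + x*y) / 9 ∧
    (4 - 2*x - 2*y) * (4 + 2*x + 2*y + x*y) / 9 ≤ 16/9 := by
  have a : 0 ≤ x + 1 := by linarith
  have b : 0 ≤ -x := by linarith
  have c : 0 ≤ y + 1 := by linarith
  have d : 0 ≤ 1 - y := by linarith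
  constructor
  · -- concavity in each variable
    have h1 : 0 ≤ (x+1) * (-x) * (4 + 2*y) := mul_nonneg (mul_nonneg a b) (by linarith)
    have h2 : 0 ≤ (y+1) * (1-y) := mul_nonneg c d
    have h3 : 0 ≤ (-x) * ((y+1) * (1-y)) := mul_nonneg b h2
    have h4 : 0 ≤ (x+1) * ((y+1) * (1-y)) := mul_nonneg a h2
    have h5 : 0 ≤ (-x) * (y+1) := mul_nonneg b c
    have h6 : 0 ≤ (x+1) * (y+1) := mul_nonneg a c
    nlinarith
  · have h1 : 0 ≤ (x+y)^2 * (4 - 2*x - 2*y) := mul_nonneg (sq_nonneg _) (by linarith)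
    have h2 : 0 ≤ x^2 * (1+y) := mul_nonneg (sq_nonneg _) (by linarith)
    have h3 : 0 ≤ y^2 * (1+x) := mul_nonneg (sq_nonneg _) (by linarith)
    have h4 : 0 ≤ x^2 * (1-y) := mul_nonneg (sq_nonneg _) d
    have h5 : 0 ≤ y^2 * (-x) := mul_nonneg (sq_nonneg _) b
    nlinarith [sq_nonneg (x+y), sq_nonneg (x-y)]

lemma gm_bounds (θ : ℝ × ℝ) (h : θ ∈ TH) : 8/9 ≤ gm θ ∧ gm θ ≤ 16/9 := by
  obtain ⟨⟨⟨h1, h2⟩, h3, h4⟩, h5⟩ := h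
  have key : Real.cos θ.1 ≤ 0 ∨ Real.cos θ.2 ≤ 0 := by
    by_contra! hc
    apply h5
    refine ⟨⟨h1, ?_⟩, h3, ?_⟩
    · by_contra! h
      exact absurd (Real.cos_nonpos_of_pi_div_two_le_of_le h.le (by linarith)) (not_le.2 hc.1)
    · by_contra! h
      exact absurd (Real.cos_nonpos_of_pi_div_two_le_of_le h.le (by linarith)) (not_le.2 hc.2)
  unfold gm chi
  rcases key with k | k
  · exact poly_bounds _ _ (neg_one_le_cos _) k (neg_one_le_cos _) (cos_le_one _)
  · have := poly_bounds _ _ (neg_one_le_cos _) k (neg_one_le_cos θ.1) (cos_le_one _)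
    constructor <;> nlinarith [this.1, this.2]

lemma sigma_bounds (g ρ : ℝ) (hρ : 0 < ρ) (h1 : 8/9 ≤ g) (h2 : g ≤ 16/9) :
    8/9 ≤ sigmaStar (1/g) ρ ∧ sigmaStar (1/g) ρ ≤ 16/9 := by
  have hg : 0 < g := by linarith
  have t1 : 1/g ≤ 9/8 := by rw [div_le_iff₀ hg]; linarith
  have t2 : 9/16 ≤ 1/g := by rw [le_div_iff₀ hg]; linarith
  unfold sigmaStar
  have hd : 0 < 1 + (1 + 1/g) * ρ := by positivity
  rw [le_div_iff₀ hd, div_le_iff₀ hd]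
  constructor <;> nlinarith [mul_le_mul_of_nonneg_right t1 hρ.le, mul_le_mul_of_nonneg_right t2 hρ.le]

theorem stmt_13 (ρ : ℝ) (hρ : 0 < ρ) (ω : ℝ) :
    1/3 ≤ sSup ((fun θ =>
        max |1 - ω| (max |1 - ω * gm θ| |1 - ω * sigmaStar (1 / gm θ) ρ|)) '' TH) ∧
      (sSup ((fun θ =>
        max |1 - ω| (max |1 - ω * gm θ| |1 - ω * sigmaStar (1 / gm θ) ρ|)) '' TH) = 1/3
        ↔ ω = 3/4) := by
  set f : ℝ × ℝ → ℝ := fun θ =>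
    max |1 - ω| (max |1 - ω * gm θ| |1 - ω * sigmaStar (1 / gm θ) ρ|) with hf
  have hpi := Real.pi_pos
  have bnd : ∀ a : ℝ, 8/9 ≤ a → a ≤ 16/9 → |1 - ω * a| ≤ 1 + |ω| * (16/9) := by
    intro a h1 h2
    have h3 : |1 - ω * a| ≤ |1| + |ω * a| := abs_sub _ _
    rw [abs_mul, abs_one, abs_of_nonneg (by linarith : 0 ≤ a)] at h3
    nlinarith [abs_nonneg ω]
  have hbdd : BddAbove (f '' TH) := by
    refine ⟨1 + |ω| * (16/9), ?_⟩
    rintro _ ⟨θ, hθ, rfl⟩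
    obtain ⟨g1, g2⟩ := gm_bounds θ hθ
    obtain ⟨s1, s2⟩ := sigma_bounds _ ρ hρ g1 g2
    refine max_le ?_ (max_le (bnd _ g1 g2) (bnd _ s1 s2))
    simpa using bnd 1 (by norm_num) (by norm_num)
  have m1 : ((π, π) : ℝ × ℝ) ∈ TH :=
    ⟨⟨⟨by dsimp only; linarith, by dsimp only; linarith⟩,
      by dsimp only; linarith, by dsimp only; linarith⟩,
      fun h => by have := h.1.2; dsimp only at this; linarith⟩
  have m2 : ((π/2, 3*π/2) : ℝ × ℝ) ∈ TH :=
    ⟨⟨⟨by dsimp only; linarith, by dsimp only; linarith⟩,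
      by dsimp only; linarith, by dsimp only; linarith⟩,
      fun h => by have := h.2.2; dsimp only at this; linarith⟩
  have e1 : gm (π, π) = 8/9 := by simp [gm, chi]; norm_num
  have c3 : Real.cos (3*π/2) = 0 := by
    rw [show 3*π/2 = π/2 + π by ring, Real.cos_add_pi]; simp
  have e2 : gm (π/2, 3*π/2) = 16/9 := by simp [gm, chi, c3]; norm_num
  have l1 : |1 - ω * (8/9)| ≤ sSup (f '' TH) := by
    rw [← e1]
    exact le_trans (le_trans (le_max_left _ _) (le_max_right _ _))
      (le_csSup hbdd (mem_image_of_mem f m1))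
  have l2 : |1 - ω * (16/9)| ≤ sSup (f '' TH) := by
    rw [← e2]
    exact le_trans (le_trans (le_max_left _ _) (le_max_right _ _))
      (le_csSup hbdd (mem_image_of_mem f m2))
  have l1' := (abs_le.1 l1).2
  have l2' := (abs_le.1 l2).1
  have low : 1/3 ≤ sSup (f '' TH) := by linarith
  refine ⟨low, fun h => ?_, fun h => le_antisymm ?_ low⟩
  · rw [h] at l1' l2'
    linarith
  · apply csSup_le ⟨_, mem_image_of_mem f m1⟩
    rintro _ ⟨θ, hθ, rfl⟩
    obtain ⟨g1, g2⟩ := gm_bounds θ hθ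
    obtain ⟨s1, s2⟩ := sigma_bounds _ ρ hρ g1 g2
    simp only [hf]
    rw [h]
    refine max_le ?_ (max_le ?_ ?_) <;> rw [abs_le] <;> constructor <;> linarith
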